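/- Let R0 > 0, T > 0, L0 > 0, δ > 0 and let f : ℝ × [R0,∞) → ℝ be continuous and T-periodic in its first variable, satisfying: there exist constants μ̌ ≤ μ̂ and a nonnegative integer N with (Nπ/T)² < μ̌, μ̂ < ((N+1)π/T)², and μ̌ ≤ liminf_{ρ→+∞} f(t,ρ)/ρ ≤ limsup_{ρ→+∞} f(t,ρ)/ρ ≤ μ̂ uniformly in t. Then there exist χ̄ > 0 and C > 0 (independent of n and L) such that every T-periodic solution x of x'' + g_n(L,t,x) = 0 with L ∈ [0,L0] whose orbit satisfies x(t)² + x'(t)² > χ̄² at all times where x(t) ≥ 0 satisfies (1/C)·‖x‖_∞ ≤ ‖x'‖_∞ ≤ C·‖x‖_∞ and x(t) > −‖x'‖_∞/√n ≥ −C·‖x‖_∞/√n for every t. -/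

import Mathlib

open Real Filter Set

/-- `g(L,t,r) = −L²/(r+R0)³ + f(t, r+R0)`. -/
noncomputable def gFun (R0 : ℝ) (f : ℝ → ℝ → ℝ) (L t r : ℝ) : ℝ :=
  -(L ^ 2) / (r + R0) ^ 3 + f t (r + R0)

/-- The approximating nonlinearity `g_n`. -/
noncomputable def gApprox (R0 δ : ℝ) (f : ℝ → ℝ → ℝ) (n : ℕ) (L t x : ℝ) : ℝ :=
  if 1 / (n : ℝ) ≤ x then gFun R0 f L t x
  else if 0 < x then (n : ℝ) * x * (gFun R0 f L t x + δ) - δ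
  else (n : ℝ) * x - δ

/-- Sup norm over `[0,T]`. -/
noncomputable def supNorm (T : ℝ) (x : ℝ → ℝ) : ℝ :=
  sSup ((fun t => |x t|) '' Icc (0 : ℝ) T)

/-!
Write the equation as `x'' + h(t, x) = 0` and compare it with the autonomous oscillator whose force
is `n * u - δ` for `u ≤ 0` and `u - δ` for `u ≥ 0`. The energy of that oscillator is exactly
conserved by `x` while `x ≤ 0`. While `x ≥ 0` the orbit lies outside a large disc, where the energy
is comparable with `x² + x'²`; linear growth of `h` then bounds the logarithmic derivative of the
energy independently of `n`, so the energies at any two times are comparable up to a uniform factor.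

The solution must change sign: by periodicity the force `h(t, x(t))` vanishes somewhere, and it is
negative for `x < 0` and positive for large `x`. At a zero of `x` the energy is at most `‖x'‖∞²`,
and at a maximum point it is at most `‖x‖∞²`, which gives both comparisons of norms. On an excursion
below zero the conserved energy dominates `n * x²` and equals the value of `x'²` at the start or end
of the excursion; this gives the lower bound on `x`.
-/

lemma hasDerivAt_min_zero_sq (u : ℝ) : HasDerivAt (fun y : ℝ ↦ min y 0 ^ 2) (2 * min u 0) u := by
  refine hasDerivAt_of_hasDerivAt_of_ne' (x := 0) (g := fun y ↦ 2 * min y 0) (fun y hy ↦ ?_)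
    (by fun_prop) (by fun_prop) u
  rcases hy.lt_or_gt with hneg | hpos
  · rw [min_eq_left hneg.le]
    have hsq : HasDerivAt (fun z ↦ z ^ 2) (2 * y) y := by simpa using hasDerivAt_pow 2 y
    refine hsq.congr_of_eventuallyEq ?_
    filter_upwards [Iio_mem_nhds hneg] with z hz
    rw [min_eq_left (le_of_lt hz)]
  · rw [min_eq_right hpos.le, mul_zero]
    refine (hasDerivAt_const y (0 : ℝ)).congr_of_eventuallyEq ?_
    filter_upwards [Ioi_mem_nhds hpos] with z hz
    rw [min_eq_right (le_of_lt hz), zero_pow two_ne_zero]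

lemma deriv_eq_zero_of_isMaxOn_Icc_of_eq_endpoints {a b t : ℝ} {φ φ' : ℝ → ℝ} (hab : a < b)
    (hφ : ∀ s ∈ Icc a b, HasDerivWithinAt φ (φ' s) (Icc a b) s) (hval : φ a = φ b)
    (hder : φ' a = φ' b) (ht : t ∈ Icc a b) (hmax : IsMaxOn φ (Icc a b) t) : φ' t = 0 := by
  have endpoint (ha : IsMaxOn φ (Icc a b) a) : φ' a = 0 := by
    have hb : IsMaxOn φ (Icc a b) b := fun s hs ↦ (ha hs).trans hval.le
    have left : (b - a) * φ' a ≤ 0 := by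
      simpa using ha.localize.hasFDerivWithinAt_nonpos
        (hφ a (left_mem_Icc.2 hab.le)).hasFDerivWithinAt
        (sub_mem_posTangentConeAt_of_segment_subset (segment_eq_Icc hab.le).subset)
    have right : (a - b) * φ' b ≤ 0 := by
      simpa using hb.localize.hasFDerivWithinAt_nonpos
        (hφ b (right_mem_Icc.2 hab.le)).hasFDerivWithinAt
        (sub_mem_posTangentConeAt_of_segment_subset
          (by rw [segment_symm, segment_eq_Icc hab.le]))
    rw [← hder] at right
    nlinarith
  rcases ht.1.eq_or_lt with rfl | hat
  · exact endpoint hmax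
  rcases ht.2.eq_or_lt with rfl | htb
  · exact hder ▸ endpoint fun s hs ↦ (hmax hs).trans hval.ge
  · have hnhds : Icc a b ∈ nhds t := Icc_mem_nhds hat htb
    exact (hmax.isLocalMax hnhds).hasDerivAt_eq_zero ((hφ t ht).hasDerivAt hnhds)

lemma le_exp_mul_abs_sub_mul_of_abs_deriv_le {S : Set ℝ} (hS : Convex ℝ S) {K : ℝ} {V V' : ℝ → ℝ}
    (hV : ∀ t ∈ S, HasDerivWithinAt V (V' t) S t) (hbound : ∀ t ∈ S, |V' t| ≤ K * V t)
    {s t : ℝ} (hs : s ∈ S) (ht : t ∈ S) : V t ≤ exp (K * |t - s|) * V s := by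
  have hderiv (c : ℝ) : ∀ r ∈ S, HasDerivWithinAt (fun r ↦ exp (c * r) * V r)
      (exp (c * r) * (c * V r + V' r)) S r := fun r hr ↦ by
    have hexp : HasDerivAt (fun r ↦ exp (c * r)) (exp (c * r) * c) r := by
      simpa using ((hasDerivAt_id r).const_mul c).exp
    exact (hexp.hasDerivWithinAt.mul (hV r hr)).congr_deriv (by ring)
  have hcont (c : ℝ) : ContinuousOn (fun r ↦ exp (c * r) * V r) S :=
    fun r hr ↦ (hderiv c r hr).continuousWithinAt
  have hderiv_interior (c : ℝ) : ∀ r ∈ interior S, HasDerivWithinAt (fun r ↦ exp (c * r) * V r)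
      (exp (c * r) * (c * V r + V' r)) (interior S) r :=
    fun r hr ↦ (hderiv c r (interior_subset hr)).mono interior_subset
  rcases le_total s t with hst | hts
  · have hanti : AntitoneOn (fun r ↦ exp (-K * r) * V r) S :=
      antitoneOn_of_hasDerivWithinAt_nonpos hS (hcont (-K)) (hderiv_interior (-K)) fun r hr ↦
        mul_nonpos_of_nonneg_of_nonpos (exp_pos _).le
          (by linarith [le_of_abs_le (hbound r (interior_subset hr))])
    calc V t = exp (K * t) * (exp (-K * t) * V t) := by
          rw [← mul_assoc, ← exp_add]; simp
      _ ≤ exp (K * t) * (exp (-K * s) * V s) := by gcongr ?_ * ?_; exact hanti hs ht hst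
      _ = exp (K * |t - s|) * V s := by
          rw [← mul_assoc, ← exp_add, abs_of_nonneg (sub_nonneg.2 hst)]; ring_nf
  · have hmono : MonotoneOn (fun r ↦ exp (K * r) * V r) S :=
      monotoneOn_of_hasDerivWithinAt_nonneg hS (hcont K) (hderiv_interior K) fun r hr ↦
        mul_nonneg (exp_pos _).le
          (by linarith [neg_le_of_abs_le (hbound r (interior_subset hr))])
    calc V t = exp (-K * t) * (exp (K * t) * V t) := by
          rw [← mul_assoc, ← exp_add]; simp
      _ ≤ exp (-K * t) * (exp (K * s) * V s) := by gcongr ?_ * ?_; exact hmono ht hs hts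
      _ = exp (K * |t - s|) * V s := by
          rw [← mul_assoc, ← exp_add, abs_of_nonpos (sub_nonpos.2 hts)]; ring_nf

lemma exists_eq_zero_forall_uIcc_nonpos {φ : ℝ → ℝ} {s t : ℝ} (hφ : ContinuousOn φ (uIcc s t))
    (hs : φ s = 0) (ht : φ t ≤ 0) :
    ∃ r ∈ uIcc s t, φ r = 0 ∧ ∀ u ∈ uIcc r t, φ u ≤ 0 := by
  have hcompact : IsCompact (uIcc s t ∩ φ ⁻¹' {0}) :=
    isCompact_uIcc.of_isClosed_subset
      (hφ.preimage_isClosed_of_isClosed isCompact_uIcc.isClosed isClosed_singleton)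
      inter_subset_left
  obtain ⟨r, ⟨hr, hr0⟩, hclosest⟩ := hcompact.exists_isMinOn (f := fun r ↦ |r - t|)
    ⟨s, left_mem_uIcc, hs⟩ (by fun_prop)
  refine ⟨r, hr, hr0, fun u hu ↦ ?_⟩
  by_contra! hupos
  have hsub : uIcc u t ⊆ uIcc s t :=
    uIcc_subset_uIcc_right (uIcc_subset_uIcc_right hr hu)
  obtain ⟨w, hw, hw0⟩ := intermediate_value_uIcc (hφ.mono hsub)
    (show (0 : ℝ) ∈ uIcc (φ u) (φ t) from mem_uIcc.2 (.inr ⟨ht, hupos.le⟩))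
  have hrw : |r - t| ≤ |w - t| := hclosest ⟨hsub hw, hw0⟩
  have hru : u = r := by
    rw [mem_uIcc] at hu hw
    grind
  exact hupos.ne' (hru ▸ hr0)

lemma exists_abs_le_mul_one_add {X : Type*} [TopologicalSpace X] {K : Set X} (hK : IsCompact K)
    {f : X → ℝ → ℝ} {a B : ℝ} (ha : 0 ≤ a)
    (hf : ContinuousOn (fun q : X × ℝ ↦ f q.1 q.2) (K ×ˢ Ici a))
    (hlin : ∀ᶠ ρ in atTop, ∀ t ∈ K, |f t ρ| ≤ B * ρ) :
    ∃ A, 0 ≤ A ∧ ∀ t ∈ K, ∀ ρ, a ≤ ρ → |f t ρ| ≤ A * (1 + ρ) := by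
  obtain ⟨M, hM⟩ := eventually_atTop.1 hlin
  obtain ⟨D, hD⟩ := (hK.prod (isCompact_Icc (a := a) (b := M))).exists_bound_of_continuousOn
    (hf.mono (prod_mono_right Icc_subset_Ici_self))
  set A := max 0 (max B D)
  have hA : 0 ≤ A := le_max_left _ _
  refine ⟨A, hA, fun t ht ρ hρ ↦ ?_⟩
  have hρ0 : 0 ≤ ρ := ha.trans hρ
  rcases le_total M ρ with hMρ | hρM
  · calc |f t ρ| ≤ B * ρ := hM ρ hMρ t ht
      _ ≤ A * (1 + ρ) := by
          gcongr
          exacts [(le_max_left _ _).trans (le_max_right _ _), by linarith]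
  · calc |f t ρ| ≤ D := hD (t, ρ) ⟨ht, hρ, hρM⟩
      _ ≤ A := (le_max_right _ _).trans (le_max_right _ _)
      _ ≤ A * (1 + ρ) := le_mul_of_one_le_right hA (by linarith)

section SupNorm

variable {T : ℝ} {φ : ℝ → ℝ}

lemma abs_le_supNorm (hφ : ContinuousOn φ (Icc 0 T)) {t : ℝ} (ht : t ∈ Icc 0 T) :
    |φ t| ≤ supNorm T φ :=
  le_csSup (isCompact_Icc.image_of_continuousOn hφ.abs).bddAbove ⟨t, ht, rfl⟩

lemma sq_le_supNorm_sq (hφ : ContinuousOn φ (Icc 0 T)) {t : ℝ} (ht : t ∈ Icc 0 T) :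
    φ t ^ 2 ≤ supNorm T φ ^ 2 :=
  sq_le_sq' (neg_le_of_abs_le (abs_le_supNorm hφ ht)) (le_of_abs_le (abs_le_supNorm hφ ht))

lemma supNorm_le (hT : 0 ≤ T) {b : ℝ} (hb : ∀ t ∈ Icc 0 T, |φ t| ≤ b) : supNorm T φ ≤ b :=
  csSup_le ((nonempty_Icc.2 hT).image _) (forall_mem_image.2 hb)

lemma supNorm_nonneg : 0 ≤ supNorm T φ :=
  Real.sSup_nonneg (forall_mem_image.2 fun _ _ ↦ abs_nonneg _)

lemma supNorm_le_sqrt_mul (hT : 0 ≤ T) {c b : ℝ} (hc : 0 ≤ c) (hb : 0 ≤ b)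
    (hsq : ∀ t ∈ Icc 0 T, φ t ^ 2 ≤ c * b ^ 2) : supNorm T φ ≤ √c * b :=
  supNorm_le hT fun t ht ↦
    abs_le_of_sq_le_sq (by rw [mul_pow, sq_sqrt hc]; exact hsq t ht) (by positivity)

end SupNorm

/-- The energy of the point `(u, v)` of the phase plane for `u'' + k * u = δ` on `u ≤ 0` and
`u'' + u = δ` on `u ≥ 0`, normalised as `v ^ 2` plus twice the potential. -/
noncomputable def phaseEnergy (k δ u v : ℝ) : ℝ :=
  v ^ 2 + u ^ 2 - 2 * δ * u + (k - 1) * min u 0 ^ 2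

section PhaseEnergy

variable {k δ A χ g u v : ℝ}

lemma phaseEnergy_of_nonneg (hu : 0 ≤ u) :
    phaseEnergy k δ u v = v ^ 2 + u ^ 2 - 2 * δ * u := by
  rw [phaseEnergy, min_eq_right hu]; ring

lemma phaseEnergy_of_nonpos (hu : u ≤ 0) :
    phaseEnergy k δ u v = v ^ 2 + k * u ^ 2 - 2 * δ * u := by
  rw [phaseEnergy, min_eq_left hu]; ring

lemma sq_add_sq_le_two_mul_phaseEnergy (hk : 1 ≤ k) (hδ : 0 ≤ δ) (hχδ : 4 * δ ≤ χ)
    (hout : 0 ≤ u → χ ^ 2 < u ^ 2 + v ^ 2) : u ^ 2 + v ^ 2 ≤ 2 * phaseEnergy k δ u v := by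
  rcases le_total u 0 with hu | hu
  · rw [phaseEnergy_of_nonpos hu]
    have hku : u ^ 2 ≤ k * u ^ 2 := le_mul_of_one_le_left (sq_nonneg u) hk
    have hδu : δ * u ≤ 0 := mul_nonpos_of_nonneg_of_nonpos hδ hu
    linarith [sq_nonneg u, sq_nonneg v]
  · rw [phaseEnergy_of_nonneg hu]
    have hδχ : (4 * δ) ^ 2 ≤ χ ^ 2 := pow_le_pow_left₀ (by positivity) hχδ 2
    linarith [hout hu, sq_nonneg (u - 4 * δ), sq_nonneg v]

lemma abs_two_mul_mul_sub_le (hA : 0 ≤ A) (hδ : 0 ≤ δ) (hu : 0 ≤ u)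
    (hout : 1 ≤ u ^ 2 + v ^ 2) (hg : |g| ≤ A * (1 + u)) :
    |2 * v * (u - δ - g)| ≤ 3 * (1 + A + δ) * (u ^ 2 + v ^ 2) := by
  have hforce : |u - δ - g| ≤ (1 + A + δ) * (1 + u) := by
    rw [abs_le] at hg ⊢
    constructor <;> nlinarith [mul_nonneg hδ hu]
  have hspeed : |v| * (1 + u) ≤ 3 / 2 * (u ^ 2 + v ^ 2) := by
    nlinarith [sq_nonneg (|v| - u), sq_nonneg (|v| - 1), sq_abs v]
  calc |2 * v * (u - δ - g)| = 2 * |v| * |u - δ - g| := by rw [abs_mul, abs_mul, abs_two]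
    _ ≤ 2 * |v| * ((1 + A + δ) * (1 + u)) := by gcongr
    _ = 2 * (1 + A + δ) * (|v| * (1 + u)) := by ring
    _ ≤ 2 * (1 + A + δ) * (3 / 2 * (u ^ 2 + v ^ 2)) := by gcongr
    _ = 3 * (1 + A + δ) * (u ^ 2 + v ^ 2) := by ring

lemma phaseEnergy_deriv_eq_zero (hu : u ≤ 0) (hlin : g = k * u - δ) :
    2 * v * (u - δ - g + (k - 1) * min u 0) = 0 := by
  rw [hlin, min_eq_left hu]
  ring

lemma abs_phaseEnergy_deriv_le (hk : 1 ≤ k) (hδ : 0 ≤ δ) (hA : 0 ≤ A) (hχ : 1 ≤ χ)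
    (hχδ : 4 * δ ≤ χ) (hlin : u ≤ 0 → g = k * u - δ) (hgrowth : 0 ≤ u → |g| ≤ A * (1 + u))
    (hout : 0 ≤ u → χ ^ 2 < u ^ 2 + v ^ 2) :
    |2 * v * (u - δ - g + (k - 1) * min u 0)| ≤ 6 * (1 + A + δ) * phaseEnergy k δ u v := by
  have henergy : u ^ 2 + v ^ 2 ≤ 2 * phaseEnergy k δ u v :=
    sq_add_sq_le_two_mul_phaseEnergy hk hδ hχδ hout
  rcases le_total u 0 with hu | hu
  · rw [phaseEnergy_deriv_eq_zero hu (hlin hu), abs_zero]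
    have : 0 ≤ phaseEnergy k δ u v := by nlinarith
    positivity
  · have hunit : 1 ≤ u ^ 2 + v ^ 2 := (one_le_pow₀ hχ).trans (hout hu).le
    rw [min_eq_right hu, mul_zero, add_zero]
    calc |2 * v * (u - δ - g)|
        ≤ 3 * (1 + A + δ) * (u ^ 2 + v ^ 2) := abs_two_mul_mul_sub_le hA hδ hu hunit (hgrowth hu)
      _ ≤ 3 * (1 + A + δ) * (2 * phaseEnergy k δ u v) := by gcongr
      _ = 6 * (1 + A + δ) * phaseEnergy k δ u v := by ring

end PhaseEnergy

/-- `x`, with derivative `x'`, solves `x'' + h(t, x) = 0` on `[0, T]` with periodic boundary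
conditions; at the endpoints the derivatives are one-sided. -/
structure IsPeriodicSolution (T : ℝ) (h : ℝ → ℝ → ℝ) (x x' : ℝ → ℝ) : Prop where
  hasDeriv : ∀ t ∈ Icc 0 T, HasDerivWithinAt x (x' t) (Icc 0 T) t
  hasDeriv_deriv : ∀ t ∈ Icc 0 T, HasDerivWithinAt x' (-h t (x t)) (Icc 0 T) t
  eq_endpoints : x 0 = x T
  deriv_eq_endpoints : x' 0 = x' T

namespace IsPeriodicSolution

variable {T k δ A χ : ℝ} {h : ℝ → ℝ → ℝ} {x x' : ℝ → ℝ}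

lemma continuousOn (hx : IsPeriodicSolution T h x x') : ContinuousOn x (Icc 0 T) :=
  fun t ht ↦ (hx.hasDeriv t ht).continuousWithinAt

lemma continuousOn_deriv (hx : IsPeriodicSolution T h x x') : ContinuousOn x' (Icc 0 T) :=
  fun t ht ↦ (hx.hasDeriv_deriv t ht).continuousWithinAt

lemma deriv_eq_zero_of_isMaxOn (hx : IsPeriodicSolution T h x x') (hT : 0 < T) {t : ℝ}
    (ht : t ∈ Icc 0 T) (hmax : IsMaxOn x (Icc 0 T) t) : x' t = 0 :=
  deriv_eq_zero_of_isMaxOn_Icc_of_eq_endpoints hT hx.hasDeriv hx.eq_endpoints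
    hx.deriv_eq_endpoints ht hmax

lemma deriv_eq_zero_of_isMinOn (hx : IsPeriodicSolution T h x x') (hT : 0 < T) {t : ℝ}
    (ht : t ∈ Icc 0 T) (hmin : IsMinOn x (Icc 0 T) t) : x' t = 0 :=
  neg_eq_zero.1 <| deriv_eq_zero_of_isMaxOn_Icc_of_eq_endpoints (φ := -x) (φ' := -x') hT
    (fun s hs ↦ (hx.hasDeriv s hs).neg) (congrArg Neg.neg hx.eq_endpoints)
    (congrArg Neg.neg hx.deriv_eq_endpoints) ht hmin.neg

lemma exists_force_eq_zero (hx : IsPeriodicSolution T h x x') (hT : 0 < T) :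
    ∃ c ∈ Icc 0 T, h c (x c) = 0 := by
  obtain ⟨c, hc, hc0⟩ := exists_hasDerivAt_eq_zero hT hx.continuousOn_deriv hx.deriv_eq_endpoints
    fun t ht ↦ (hx.hasDeriv_deriv t (Ioo_subset_Icc_self ht)).hasDerivAt (Icc_mem_nhds ht.1 ht.2)
  exact ⟨c, Ioo_subset_Icc_self hc, neg_eq_zero.1 hc0⟩

lemma exists_nonneg_deriv_eq_zero (hx : IsPeriodicSolution T h x x') (hT : 0 < T)
    (hneg : ∀ t ∈ Icc 0 T, ∀ u < 0, h t u < 0) : ∃ t ∈ Icc 0 T, 0 ≤ x t ∧ x' t = 0 := by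
  obtain ⟨t, ht, hmax⟩ := isCompact_Icc.exists_isMaxOn (nonempty_Icc.2 hT.le) hx.continuousOn
  refine ⟨t, ht, ?_, hx.deriv_eq_zero_of_isMaxOn hT ht hmax⟩
  obtain ⟨c, hc, hc0⟩ := hx.exists_force_eq_zero hT
  by_contra! hlt
  exact (hneg c hc (x c) ((hmax hc).trans_lt hlt)).ne hc0

lemma exists_nonpos (hx : IsPeriodicSolution T h x x') (hT : 0 < T)
    (hpos : ∀ t ∈ Icc 0 T, ∀ u > χ, 0 < h t u)
    (hout : ∀ t ∈ Icc 0 T, 0 ≤ x t → χ ^ 2 < x t ^ 2 + x' t ^ 2) : ∃ t ∈ Icc 0 T, x t ≤ 0 := by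
  obtain ⟨t, ht, hmin⟩ := isCompact_Icc.exists_isMinOn (nonempty_Icc.2 hT.le) hx.continuousOn
  refine ⟨t, ht, ?_⟩
  obtain ⟨c, hc, hc0⟩ := hx.exists_force_eq_zero hT
  by_contra! hlt
  have hχ : χ < x t := by
    have hsq := hout t ht hlt.le
    rw [hx.deriv_eq_zero_of_isMinOn hT ht hmin, zero_pow two_ne_zero, add_zero] at hsq
    exact lt_of_pow_lt_pow_left₀ 2 hlt.le hsq
  exact (hpos c hc (x c) (hχ.trans_le (hmin hc))).ne' hc0

lemma exists_eq_zero (hx : IsPeriodicSolution T h x x') (hT : 0 < T)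
    (hneg : ∀ t ∈ Icc 0 T, ∀ u < 0, h t u < 0) (hpos : ∀ t ∈ Icc 0 T, ∀ u > χ, 0 < h t u)
    (hout : ∀ t ∈ Icc 0 T, 0 ≤ x t → χ ^ 2 < x t ^ 2 + x' t ^ 2) : ∃ t ∈ Icc 0 T, x t = 0 := by
  obtain ⟨a, ha, hxa⟩ := hx.exists_nonpos hT hpos hout
  obtain ⟨b, hb, hxb, -⟩ := hx.exists_nonneg_deriv_eq_zero hT hneg
  exact isPreconnected_Icc.intermediate_value ha hb hx.continuousOn ⟨hxa, hxb⟩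

lemma hasDerivWithinAt_phaseEnergy (hx : IsPeriodicSolution T h x x') (k δ : ℝ) {t : ℝ}
    (ht : t ∈ Icc 0 T) :
    HasDerivWithinAt (fun s ↦ phaseEnergy k δ (x s) (x' s))
      (2 * x' t * (x t - δ - h t (x t) + (k - 1) * min (x t) 0)) (Icc 0 T) t := by
  have hxt := hx.hasDeriv t ht
  refine (((((hx.hasDeriv_deriv t ht).pow 2).add (hxt.pow 2)).sub (hxt.const_mul (2 * δ))).add
    (((hasDerivAt_min_zero_sq (x t)).comp_hasDerivWithinAt t hxt).const_mul (k - 1))).congr_deriv ?_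
  push_cast
  ring

lemma sq_add_sq_le_mul_phaseEnergy (hx : IsPeriodicSolution T h x x') (hk : 1 ≤ k) (hδ : 0 ≤ δ)
    (hA : 0 ≤ A) (hχ : 1 ≤ χ) (hχδ : 4 * δ ≤ χ)
    (hlin : ∀ t ∈ Icc 0 T, ∀ u ≤ 0, h t u = k * u - δ)
    (hgrowth : ∀ t ∈ Icc 0 T, ∀ u ≥ 0, |h t u| ≤ A * (1 + u))
    (hout : ∀ t ∈ Icc 0 T, 0 ≤ x t → χ ^ 2 < x t ^ 2 + x' t ^ 2) {s t : ℝ} (hs : s ∈ Icc 0 T)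
    (ht : t ∈ Icc 0 T) :
    x t ^ 2 + x' t ^ 2 ≤ 2 * exp (6 * (1 + A + δ) * T) * phaseEnergy k δ (x s) (x' s) := by
  have hcoercive : ∀ r ∈ Icc 0 T, x r ^ 2 + x' r ^ 2 ≤ 2 * phaseEnergy k δ (x r) (x' r) :=
    fun r hr ↦ sq_add_sq_le_two_mul_phaseEnergy hk hδ hχδ (hout r hr)
  have hnonneg : 0 ≤ phaseEnergy k δ (x s) (x' s) := by nlinarith [hcoercive s hs]
  calc x t ^ 2 + x' t ^ 2 ≤ 2 * phaseEnergy k δ (x t) (x' t) := hcoercive t ht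
    _ ≤ 2 * (exp (6 * (1 + A + δ) * |t - s|) * phaseEnergy k δ (x s) (x' s)) := by
        gcongr
        exact le_exp_mul_abs_sub_mul_of_abs_deriv_le (convex_Icc 0 T)
          (fun r hr ↦ hx.hasDerivWithinAt_phaseEnergy k δ hr)
          (fun r hr ↦ abs_phaseEnergy_deriv_le hk hδ hA hχ hχδ (hlin r hr _)
            (hgrowth r hr _) (hout r hr)) hs ht
    _ ≤ 2 * (exp (6 * (1 + A + δ) * T) * phaseEnergy k δ (x s) (x' s)) := by
        have : |t - s| ≤ T := by simpa using abs_sub_le_of_le_of_le ht.1 ht.2 hs.1 hs.2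
        gcongr
    _ = 2 * exp (6 * (1 + A + δ) * T) * phaseEnergy k δ (x s) (x' s) := by ring

lemma phaseEnergy_le_supNorm_deriv_sq (hx : IsPeriodicSolution T h x x')
    (hlin : ∀ t ∈ Icc 0 T, ∀ u ≤ 0, h t u = k * u - δ) {s t : ℝ} (hs : s ∈ Icc 0 T)
    (hxs : x s = 0) (ht : t ∈ Icc 0 T) (hxt : x t ≤ 0) :
    phaseEnergy k δ (x t) (x' t) ≤ supNorm T x' ^ 2 := by
  have hst : uIcc s t ⊆ Icc 0 T := ordConnected_Icc.uIcc_subset hs ht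
  obtain ⟨r, hr, hxr, hnonpos⟩ := exists_eq_zero_forall_uIcc_nonpos (hx.continuousOn.mono hst)
    hxs hxt
  have hrt : uIcc r t ⊆ Icc 0 T := (uIcc_subset_uIcc_right hr).trans hst
  have hconserved : phaseEnergy k δ (x t) (x' t) ≤ phaseEnergy k δ (x r) (x' r) := by
    simpa using le_exp_mul_abs_sub_mul_of_abs_deriv_le (K := 0) (convex_uIcc r t)
      (fun u hu ↦ (hx.hasDerivWithinAt_phaseEnergy k δ (hrt hu)).mono hrt)
      (fun u hu ↦ by
        rw [phaseEnergy_deriv_eq_zero (hnonpos u hu) (hlin u (hrt hu) _ (hnonpos u hu))]; simp)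
      left_mem_uIcc right_mem_uIcc
  calc phaseEnergy k δ (x t) (x' t) ≤ phaseEnergy k δ (x r) (x' r) := hconserved
    _ = x' r ^ 2 := by rw [phaseEnergy_of_nonneg hxr.ge, hxr]; ring
    _ ≤ supNorm T x' ^ 2 := sq_le_supNorm_sq hx.continuousOn_deriv (hst hr)

lemma neg_supNorm_deriv_div_sqrt_lt (hx : IsPeriodicSolution T h x x') (hk : 0 < k) (hδ : 0 < δ)
    (hlin : ∀ t ∈ Icc 0 T, ∀ u ≤ 0, h t u = k * u - δ) (hY : 0 < supNorm T x') {s t : ℝ}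
    (hs : s ∈ Icc 0 T) (hxs : x s = 0) (ht : t ∈ Icc 0 T) : -supNorm T x' / √k < x t := by
  have hsqrt : 0 < √k := sqrt_pos.2 hk
  rw [div_lt_iff₀ hsqrt]
  rcases le_or_gt 0 (x t) with hxt | hxt
  · exact (neg_neg_of_pos hY).trans_le (by positivity)
  · have henergy := hx.phaseEnergy_le_supNorm_deriv_sq hlin hs hxs ht hxt.le
    rw [phaseEnergy_of_nonpos hxt.le] at henergy
    have hsq : (x t * √k) ^ 2 < supNorm T x' ^ 2 := by
      rw [mul_pow, sq_sqrt hk.le]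
      linarith [sq_nonneg (x' t), mul_neg_of_pos_of_neg hδ hxt]
    exact (abs_lt_of_sq_lt_sq' hsq hY.le).1

theorem supNorm_comparison_and_lower_bound (hx : IsPeriodicSolution T h x x') (hT : 0 < T)
    (hk : 1 ≤ k) (hδ : 0 < δ) (hA : 0 ≤ A) (hχ : 1 ≤ χ) (hχδ : 4 * δ ≤ χ)
    (hlin : ∀ t ∈ Icc 0 T, ∀ u ≤ 0, h t u = k * u - δ)
    (hgrowth : ∀ t ∈ Icc 0 T, ∀ u ≥ 0, |h t u| ≤ A * (1 + u))
    (hpos : ∀ t ∈ Icc 0 T, ∀ u > χ, 0 < h t u)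
    (hout : ∀ t ∈ Icc 0 T, 0 ≤ x t → χ ^ 2 < x t ^ 2 + x' t ^ 2) :
    supNorm T x ≤ √(2 * exp (6 * (1 + A + δ) * T)) * supNorm T x' ∧
      supNorm T x' ≤ √(2 * exp (6 * (1 + A + δ) * T)) * supNorm T x ∧
      ∀ t ∈ Icc 0 T, -supNorm T x' / √k < x t := by
  set Q := 2 * exp (6 * (1 + A + δ) * T)
  have hneg : ∀ t ∈ Icc 0 T, ∀ u < 0, h t u < 0 := fun t ht u hu ↦ by
    rw [hlin t ht u hu.le]; nlinarith
  obtain ⟨p, hp, hxp, hx'p⟩ := hx.exists_nonneg_deriv_eq_zero hT hneg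
  obtain ⟨z, hz, hxz⟩ := hx.exists_eq_zero hT hneg hpos hout
  have hcompare {s t : ℝ} (hs : s ∈ Icc 0 T) (ht : t ∈ Icc 0 T) :
      x t ^ 2 + x' t ^ 2 ≤ Q * phaseEnergy k δ (x s) (x' s) :=
    hx.sq_add_sq_le_mul_phaseEnergy hk hδ.le hA hχ hχδ hlin hgrowth hout hs ht
  have henergy_zero : phaseEnergy k δ (x z) (x' z) ≤ supNorm T x' ^ 2 :=
    hx.phaseEnergy_le_supNorm_deriv_sq hlin hz hxz hz hxz.le
  have henergy_crit : phaseEnergy k δ (x p) (x' p) ≤ supNorm T x ^ 2 := by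
    rw [phaseEnergy_of_nonneg hxp, hx'p]
    linarith [sq_le_supNorm_sq hx.continuousOn hp, mul_nonneg hδ.le hxp]
  have hY : 0 < supNorm T x' := by
    have hspeed := hout z hz hxz.ge
    rw [hxz] at hspeed
    refine lt_of_pow_lt_pow_left₀ 2 supNorm_nonneg ?_
    linarith [sq_nonneg χ, sq_le_supNorm_sq hx.continuousOn_deriv hz]
  refine ⟨supNorm_le_sqrt_mul hT.le (by positivity) hY.le fun t ht ↦ ?_,
    supNorm_le_sqrt_mul hT.le (by positivity) supNorm_nonneg fun t ht ↦ ?_,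
    fun t ht ↦ hx.neg_supNorm_deriv_div_sqrt_lt (by linarith) hδ hlin hY hz hxz ht⟩
  · calc x t ^ 2 ≤ x t ^ 2 + x' t ^ 2 := le_add_of_nonneg_right (sq_nonneg _)
      _ ≤ Q * phaseEnergy k δ (x z) (x' z) := hcompare hz ht
      _ ≤ Q * supNorm T x' ^ 2 := by gcongr
  · calc x' t ^ 2 ≤ x t ^ 2 + x' t ^ 2 := le_add_of_nonneg_left (sq_nonneg _)
      _ ≤ Q * phaseEnergy k δ (x p) (x' p) := hcompare hp ht
      _ ≤ Q * supNorm T x ^ 2 := by gcongr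

end IsPeriodicSolution

section Force

variable {R0 L0 L δ t u : ℝ} {f : ℝ → ℝ → ℝ} {n : ℕ}

lemma gApprox_of_nonpos (hn : 0 < n) (hu : u ≤ 0) :
    gApprox R0 δ f n L t u = n * u - δ := by
  have : 0 < 1 / (n : ℝ) := by positivity
  rw [gApprox, if_neg (by linarith), if_neg (by linarith)]

lemma gApprox_of_one_le (hn : 0 < n) (hu : 1 ≤ u) : gApprox R0 δ f n L t u = gFun R0 f L t u :=
  if_pos ((div_le_one₀ (by positivity)).2 (by exact_mod_cast hn) |>.trans hu)

lemma abs_gApprox_le (hn : 0 < n) (hδ : 0 ≤ δ) (hu : 0 ≤ u) :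
    |gApprox R0 δ f n L t u| ≤ |gFun R0 f L t u| + δ := by
  have hn' : (0 : ℝ) < n := by exact_mod_cast hn
  set g := gFun R0 f L t u
  rw [gApprox]
  split_ifs with hge hpos
  · linarith
  · have hlt : n * u < 1 := by rwa [not_le, lt_div_iff₀' hn'] at hge
    have hnu : 0 ≤ n * u := by positivity
    -- On `[0, 1 / n]` the force is the convex combination of `g` and `-δ` with weight `n * u`.
    calc |n * u * (g + δ) - δ| = |n * u * g + -((1 - n * u) * δ)| := by ring_nf
      _ ≤ n * u * |g| + (1 - n * u) * δ := by
          refine (abs_add_le _ _).trans_eq ?_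
          rw [abs_neg, abs_mul, abs_of_nonneg hnu,
            abs_of_nonneg (mul_nonneg (sub_nonneg.2 hlt.le) hδ)]
      _ ≤ |g| + δ := by nlinarith [abs_nonneg g]
  · rw [le_antisymm (not_lt.1 hpos) hu, mul_zero, zero_sub, abs_neg, abs_of_nonneg hδ]
    exact le_add_of_nonneg_left (abs_nonneg g)

lemma abs_gFun_le {A : ℝ} (hR0 : 0 < R0) (hA : 0 ≤ A) (hL : L ∈ Icc 0 L0) (hu : 0 ≤ u)
    (hf : |f t (u + R0)| ≤ A * (1 + (u + R0))) :
    |gFun R0 f L t u| ≤ (L0 ^ 2 / R0 ^ 3 + A * (1 + R0)) * (1 + u) := by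
  have hq : 0 ≤ L0 ^ 2 / R0 ^ 3 := by positivity
  calc |gFun R0 f L t u| ≤ |-(L ^ 2) / (u + R0) ^ 3| + |f t (u + R0)| := abs_add_le _ _
    _ ≤ L0 ^ 2 / R0 ^ 3 + A * (1 + (u + R0)) := by
        rw [neg_div, abs_neg, abs_of_nonneg (by positivity)]
        have := hL.1
        gcongr
        exacts [hL.2, by linarith]
    _ ≤ (L0 ^ 2 / R0 ^ 3 + A * (1 + R0)) * (1 + u) := by
        nlinarith [mul_nonneg hq hu, mul_nonneg (mul_nonneg hA hR0.le) hu]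

lemma gFun_pos (hL : L ∈ Icc 0 L0) (hu : 0 ≤ u + R0)
    (hf : L0 ^ 2 / (u + R0) ^ 3 < f t (u + R0)) : 0 < gFun R0 f L t u := by
  have hle : L ^ 2 / (u + R0) ^ 3 ≤ L0 ^ 2 / (u + R0) ^ 3 := by
    have := hL.1
    gcongr
    exact hL.2
  rw [gFun, neg_div]
  linarith

lemma exists_abs_gApprox_le {K : Set ℝ} {B : ℝ} (hK : IsCompact K) (hR0 : 0 < R0) (hδ : 0 ≤ δ)
    (hf_cont : ContinuousOn (fun q : ℝ × ℝ ↦ f q.1 q.2) (K ×ˢ Ici R0))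
    (hf_lin : ∀ᶠ ρ in atTop, ∀ t ∈ K, |f t ρ| ≤ B * ρ) :
    ∃ A, 0 ≤ A ∧ ∀ n : ℕ, 0 < n → ∀ L ∈ Icc 0 L0, ∀ t ∈ K, ∀ u ≥ 0,
      |gApprox R0 δ f n L t u| ≤ A * (1 + u) := by
  obtain ⟨A, hA, hfA⟩ := exists_abs_le_mul_one_add hK hR0.le hf_cont hf_lin
  refine ⟨L0 ^ 2 / R0 ^ 3 + A * (1 + R0) + δ, by positivity, fun n hn L hL t ht u hu ↦ ?_⟩
  calc |gApprox R0 δ f n L t u| ≤ |gFun R0 f L t u| + δ := abs_gApprox_le hn hδ hu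
    _ ≤ (L0 ^ 2 / R0 ^ 3 + A * (1 + R0)) * (1 + u) + δ * (1 + u) := by
        gcongr
        exacts [abs_gFun_le hR0 hA hL hu (hfA t ht _ (by linarith)),
          le_mul_of_one_le_right hδ (by linarith)]
    _ = (L0 ^ 2 / R0 ^ 3 + A * (1 + R0) + δ) * (1 + u) := by ring

end Force

lemma eventually_div_pow_three_lt {X : Type*} {S : Set X} {f : X → ℝ → ℝ} {m : ℝ} (hm : 0 < m)
    (c : ℝ) (hf : ∀ᶠ ρ in atTop, ∀ t ∈ S, m < f t ρ / ρ) :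
    ∀ᶠ ρ in atTop, ∀ t ∈ S, c / ρ ^ 3 < f t ρ := by
  have hdecay : ∀ᶠ ρ : ℝ in atTop, c / ρ ^ 3 < m :=
    (tendsto_const_nhds.div_atTop (tendsto_pow_atTop three_ne_zero)).eventually_lt_const hm
  filter_upwards [hf, hdecay, eventually_ge_atTop 1] with ρ hfρ hcρ hρ t ht
  calc c / ρ ^ 3 < m := hcρ
    _ ≤ m * ρ := le_mul_of_one_le_right hm.le hρ
    _ < f t ρ := (lt_div_iff₀ (by linarith)).1 (hfρ t ht)

lemma eventually_le_mul_of_div_lt {X : Type*} {S : Set X} {f : X → ℝ → ℝ} {B : ℝ}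
    (hf : ∀ᶠ ρ in atTop, ∀ t ∈ S, f t ρ / ρ < B) : ∀ᶠ ρ in atTop, ∀ t ∈ S, f t ρ ≤ B * ρ := by
  filter_upwards [hf, eventually_gt_atTop 0] with ρ hfρ hρ t ht
  exact ((div_lt_iff₀ hρ).1 (hfρ t ht)).le

theorem statement11_general
    (R0 T L0 δ : ℝ) (hR0 : 0 < R0) (hT : 0 < T) (hδ : 0 < δ) (f : ℝ → ℝ → ℝ)
    (hf_cont : ContinuousOn (fun q : ℝ × ℝ => f q.1 q.2) (Icc 0 T ×ˢ Ici R0))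
    (hf_lower : ∀ᶠ ρ in atTop, ∀ t ∈ Icc 0 T, L0 ^ 2 / ρ ^ 3 < f t ρ)
    (B : ℝ) (hf_upper : ∀ᶠ ρ in atTop, ∀ t ∈ Icc 0 T, f t ρ ≤ B * ρ) :
    ∃ χbar C : ℝ, 0 < χbar ∧ 0 < C ∧
      ∀ n : ℕ, 0 < n → ∀ L ∈ Icc (0 : ℝ) L0, ∀ x x' : ℝ → ℝ,
        (∀ t ∈ Icc (0 : ℝ) T,
          HasDerivWithinAt x (x' t) (Icc (0 : ℝ) T) t ∧
          HasDerivWithinAt x' (-(gApprox R0 δ f n L t (x t))) (Icc (0 : ℝ) T) t) →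
        x 0 = x T → x' 0 = x' T →
        (∀ t ∈ Icc (0 : ℝ) T, 0 ≤ x t → χbar ^ 2 < (x t) ^ 2 + (x' t) ^ 2) →
        (1 / C) * supNorm T x ≤ supNorm T x' ∧
        supNorm T x' ≤ C * supNorm T x ∧
        (∀ t ∈ Icc (0 : ℝ) T,
          -(supNorm T x') / Real.sqrt n < x t ∧
          -(C * supNorm T x) / Real.sqrt n ≤ -(supNorm T x') / Real.sqrt n) := by
  have hf_abs : ∀ᶠ ρ in atTop, ∀ t ∈ Icc 0 T, |f t ρ| ≤ B * ρ := by
    filter_upwards [hf_lower, hf_upper, eventually_ge_atTop 0] with ρ hlower hupper hρ t ht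
    rw [abs_of_pos ((by positivity : 0 ≤ L0 ^ 2 / ρ ^ 3).trans_lt (hlower t ht))]
    exact hupper t ht
  obtain ⟨A, hA, hgrowth⟩ := exists_abs_gApprox_le (L0 := L0) isCompact_Icc hR0 hδ.le hf_cont hf_abs
  obtain ⟨M, hM⟩ := eventually_atTop.1 hf_lower
  refine ⟨max (max 1 (4 * δ)) M, √(2 * exp (6 * (1 + A + δ) * T)), by positivity, by positivity,
    fun n hn L hL x x' hsol hper hper' hout ↦ ?_⟩
  have hpos : ∀ t ∈ Icc 0 T, ∀ u > max (max 1 (4 * δ)) M, 0 < gApprox R0 δ f n L t u := by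
    intro t ht u hu
    simp only [gt_iff_lt, max_lt_iff] at hu
    rw [gApprox_of_one_le hn hu.1.1.le]
    exact gFun_pos hL (by linarith) (hM (u + R0) (by linarith) t ht)
  obtain ⟨hX, hY, hlow⟩ := IsPeriodicSolution.supNorm_comparison_and_lower_bound
    ⟨fun t ht ↦ (hsol t ht).1, fun t ht ↦ (hsol t ht).2, hper, hper'⟩ hT
    (Nat.one_le_cast.2 hn) hδ hA (by simp) (by simp)
    (fun _ _ _ hu ↦ gApprox_of_nonpos hn hu) (hgrowth n hn L hL) hpos hout
  refine ⟨?_, hY, fun t ht ↦ ⟨hlow t ht, by gcongr⟩⟩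
  rwa [one_div, inv_mul_le_iff₀ (by positivity)]

theorem statement11
    (R0 T L0 δ : ℝ) (hR0 : 0 < R0) (hT : 0 < T) (hL0 : 0 < L0) (hδ : 0 < δ)
    (f : ℝ → ℝ → ℝ)
    (hf_cont : ContinuousOn (fun q : ℝ × ℝ => f q.1 q.2) (univ ×ˢ Ici R0))
    (hf_per : ∀ t ρ, f (t + T) ρ = f t ρ)
    (μlo μhi : ℝ) (N : ℕ) (hμ : μlo ≤ μhi)
    (h1 : ((N : ℝ) * π / T) ^ 2 < μlo)
    (h2 : μhi < (((N : ℝ) + 1) * π / T) ^ 2)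
    (hlo : ∀ ε > (0 : ℝ), ∃ M : ℝ, R0 ≤ M ∧ ∀ t ρ : ℝ, M ≤ ρ → μlo - ε < f t ρ / ρ)
    (hhi : ∀ ε > (0 : ℝ), ∃ M : ℝ, R0 ≤ M ∧ ∀ t ρ : ℝ, M ≤ ρ → f t ρ / ρ < μhi + ε) :
    ∃ χbar C : ℝ, 0 < χbar ∧ 0 < C ∧
      ∀ n : ℕ, 0 < n → ∀ L ∈ Icc (0 : ℝ) L0, ∀ x x' : ℝ → ℝ,
        (∀ t ∈ Icc (0 : ℝ) T,
          HasDerivWithinAt x (x' t) (Icc (0 : ℝ) T) t ∧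
          HasDerivWithinAt x' (-(gApprox R0 δ f n L t (x t))) (Icc (0 : ℝ) T) t) →
        x 0 = x T → x' 0 = x' T →
        (∀ t ∈ Icc (0 : ℝ) T, 0 ≤ x t → χbar ^ 2 < (x t) ^ 2 + (x' t) ^ 2) →
        (1 / C) * supNorm T x ≤ supNorm T x' ∧
        supNorm T x' ≤ C * supNorm T x ∧
        (∀ t ∈ Icc (0 : ℝ) T,
          -(supNorm T x') / Real.sqrt n < x t ∧
          -(C * supNorm T x) / Real.sqrt n ≤ -(supNorm T x') / Real.sqrt n) := by
  have hμlo : 0 < μlo := (sq_nonneg _).trans_lt h1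
  exact statement11_general R0 T L0 δ hR0 hT hδ f (hf_cont.mono (prod_mono_left (subset_univ _)))
    (eventually_div_pow_three_lt (sub_pos.2 (half_lt_self hμlo)) _ (eventually_atTop.2
      ((hlo _ (half_pos hμlo)).imp fun _ hM ρ hρ t _ ↦ hM.2 t ρ hρ)))
    (μhi + 1) (eventually_le_mul_of_div_lt (eventually_atTop.2
      ((hhi 1 one_pos).imp fun _ hM ρ hρ t _ ↦ hM.2 t ρ hρ)))
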